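/- For every integer j ≥ 0: Σ_{k=0}^{j} (−1)^{j−k} ((v_{k−ℓ} − r_{k−ℓ}) + (v_{k−ℓ+1} − r_{k−ℓ+1})) ≤ Σ_{k=0}^{j} (−1)^{j−k} ((m_k − b_k) + (m_{k−ℓ+1} − b_{k−ℓ+1})). -/

import Mathlib

open LinearMap Module

noncomputable section

namespace ConeMorse

variable (A : ℤ → Type) [∀ i, AddCommGroup (A i)] [∀ i, Module ℝ (A i)]

/-- Transport along an equality of indices. -/
def lcast {m k : ℤ} (h : m = k) : A m →ₗ[ℝ] A k where
  toFun x := h ▸ x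
  map_add' x y := by subst h; rfl
  map_smul' c x := by subst h; rfl

variable (d : ∀ i, A i →ₗ[ℝ] A (i + 1))

/-- Cocycles in degree `i`. -/
def cocycles (i : ℤ) : Submodule ℝ (A i) := ker (d i)

/-- Coboundaries in degree `i`: the image of `d : A^{i-1} → A^i`. -/
def cobound (i : ℤ) : Submodule ℝ (A i) :=
  range ((lcast A (show i - 1 + 1 = i by ring)).comp (d (i - 1)))

/-- Cohomology in degree `i`: cocycles modulo coboundaries. -/
abbrev Hcoh (i : ℤ) :=
  cocycles A d i ⧸ Submodule.comap (cocycles A d i).subtype (cobound A d i)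

section OneComplex

variable (ℓ : ℤ) (φ : ∀ i, A i →ₗ[ℝ] A (i + ℓ))

/-- The cone differential `∂_C (a, b) = (∂ a + φ b, (−1)^{ℓ−1} ∂ b)` on
`Cone^i(φ) = A^i ⊕ A^{i−ℓ+1}`. -/
def coneD (i : ℤ) : (A i × A (i - ℓ + 1)) →ₗ[ℝ] (A (i + 1) × A (i + 1 - ℓ + 1)) :=
  LinearMap.prod
    ((d i).comp (LinearMap.fst ℝ (A i) (A (i - ℓ + 1))) +
      (lcast A (show i - ℓ + 1 + ℓ = i + 1 by ring)).comp
        ((φ (i - ℓ + 1)).comp (LinearMap.snd ℝ (A i) (A (i - ℓ + 1)))))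
    (((-1 : ℝ) ^ (ℓ - 1)) •
      ((lcast A (show i - ℓ + 1 + 1 = i + 1 - ℓ + 1 by ring)).comp
        ((d (i - ℓ + 1)).comp (LinearMap.snd ℝ (A i) (A (i - ℓ + 1))))))

variable [∀ i, FiniteDimensional ℝ (A i)]

/-- `m_k`: the dimension of the cochain group in degree `k`. -/
def mnum (k : ℤ) : ℕ := finrank ℝ (A k)

/-- `b_k`: the dimension of the cohomology in degree `k`. -/
def bnum (k : ℤ) : ℕ := finrank ℝ (Hcoh A d k)

/-- `v_k`: the rank of `φ : A^k → A^{k+ℓ}`. -/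
def vnum (k : ℤ) : ℕ := finrank ℝ (range (φ k))

/-- `r_k`: the rank of the induced map `[φ] : H^k → H^{k+ℓ}`, computed as the dimension of
`φ(Z^k)/(φ(Z^k) ∩ B^{k+ℓ})`. -/
def rnum (k : ℤ) : ℕ :=
  finrank ℝ ((Submodule.map (φ k) (cocycles A d k)) ⧸
    Submodule.comap (Submodule.map (φ k) (cocycles A d k)).subtype (cobound A d (k + ℓ)))

/-- `b^φ_k`: the dimension of the cone cohomology in degree `k`. -/
def bphi (k : ℤ) : ℕ :=
  finrank ℝ (Hcoh (fun i => A i × A (i - ℓ + 1)) (coneD A d ℓ φ) k)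

end OneComplex

end ConeMorse

open ConeMorse

/-!
Write `ρ_k = rank (∂ : C^k → C^{k+1})`. Rank–nullity gives `m_k - b_k = ρ_k + ρ_{k-1}`. Passing from
`im φ` to `φ(Z^k)` costs at most the codimension `ρ_k` of `Z^k`, and passing on to
`φ(Z^k) / (φ(Z^k) ∩ B^{k+ℓ})` costs at most `dim B^{k+ℓ} = ρ_{k+ℓ-1}`, so
`0 ≤ v_k - r_k ≤ ρ_k + ρ_{k+ℓ-1}`. With `f k = v_{k-ℓ} - r_{k-ℓ}` and `g k = ρ_{k-1} + ρ_{k-ℓ}`, the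
two alternating sums have terms `f k + f (k + 1)` and `g k + g (k + 1)`. They telescope, and since
`f 0 = g 0 = 0` the claim becomes `f (j + 1) ≤ g (j + 1)`.
-/

namespace ConeMorse

section LinearAlgebra

variable {K V W U : Type*} [DivisionRing K] [AddCommGroup V] [Module K V] [AddCommGroup W]
  [Module K W] [AddCommGroup U] [Module K U]

lemma finrank_quotient_comap_subtype_add_finrank_inf (P Q : Submodule K V)
    [FiniteDimensional K P] :
    finrank K (P ⧸ Q.comap P.subtype) + finrank K ↥(P ⊓ Q) = finrank K P := by
  rw [← Submodule.map_comap_subtype, Submodule.finrank_map_subtype_eq,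
    Submodule.finrank_quotient_add_finrank]

lemma finrank_range_le_finrank_map_ker_add_finrank_range [FiniteDimensional K V]
    (f : V →ₗ[K] W) (g : V →ₗ[K] U) :
    finrank K (range f) ≤ finrank K ((ker g).map f) + finrank K (range g) := by
  obtain ⟨Q, hQ⟩ := (ker g).exists_isCompl
  have finrank_Q : finrank K Q = finrank K (range g) := by
    have := Submodule.finrank_add_eq_of_isCompl hQ
    have := finrank_range_add_finrank_ker g
    omega
  calc finrank K (range f)
      = finrank K ↥((ker g).map f ⊔ Q.map f) := by
        rw [← Submodule.map_sup, hQ.sup_eq_top, range_eq_map]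
    _ ≤ finrank K ((ker g).map f) + finrank K (Q.map f) :=
        Submodule.finrank_add_le_finrank_add_finrank _ _
    _ ≤ finrank K ((ker g).map f) + finrank K (range g) := by
        grw [Submodule.finrank_map_le f Q, finrank_Q]

end LinearAlgebra

section AlternatingSums

lemma alternating_sum_add_succ {R : Type*} [CommRing R] (f : ℕ → R) (j : ℕ) :
    ∑ k ∈ Finset.range (j + 1), (-1) ^ (j - k) * (f k + f (k + 1)) =
      f (j + 1) + (-1) ^ j * f 0 := by
  induction j with
  | zero => simp [add_comm]
  | succ j ih =>
    have sign_flip : ∀ k ∈ Finset.range (j + 1),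
        (-1) ^ (j + 1 - k) * (f k + f (k + 1)) = -((-1) ^ (j - k) * (f k + f (k + 1))) := by
      intro k hk
      rw [Nat.succ_sub (Finset.mem_range_succ_iff.mp hk), pow_succ]
      ring
    rw [Finset.sum_range_succ, Finset.sum_congr rfl sign_flip, Finset.sum_neg_distrib, ih,
      Nat.sub_self]
    ring

lemma alternating_sum_add_succ_le {R : Type*} [CommRing R] [PartialOrder R] [IsOrderedAddMonoid R]
    {f g : ℕ → R} {j : ℕ} (h_zero : f 0 = g 0) (h_succ : f (j + 1) ≤ g (j + 1)) :
    ∑ k ∈ Finset.range (j + 1), (-1) ^ (j - k) * (f k + f (k + 1)) ≤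
      ∑ k ∈ Finset.range (j + 1), (-1) ^ (j - k) * (g k + g (k + 1)) := by
  rw [alternating_sum_add_succ, alternating_sum_add_succ, h_zero]
  gcongr

end AlternatingSums

section Ranks

variable (A : ℤ → Type) [∀ i, AddCommGroup (A i)] [∀ i, Module ℝ (A i)]

lemma lcast_injective {m k : ℤ} (h : m = k) : Function.Injective (lcast A h) := by
  subst h
  exact Function.injective_id

variable (d : ∀ i, A i →ₗ[ℝ] A (i + 1))

/-- The rank `ρ_k` of the differential leaving degree `k`, which is also the dimension of the
coboundaries in degree `k + 1`. -/
def diffRank (k : ℤ) : ℕ := finrank ℝ (range (d k))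

lemma diffRank_eq_zero (k : ℤ) [Subsingleton (A k)] : diffRank A d k = 0 := by
  rw [diffRank, Subsingleton.elim (d k) 0, range_zero, finrank_bot]

lemma finrank_cobound (k : ℤ) : finrank ℝ (cobound A d k) = diffRank A d (k - 1) := by
  rw [cobound, range_comp]
  exact (Submodule.equivMapOfInjective _ (lcast_injective A _) _).finrank_eq.symm

variable {d} in
lemma cobound_le_cocycles (hd : ∀ i, (d (i + 1)).comp (d i) = 0) (k : ℤ) :
    cobound A d k ≤ cocycles A d k := by
  have d_lcast_d : ∀ {i : ℤ} (h : i + 1 = k) (x : A i), d k (lcast A h (d i x)) = 0 := by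
    rintro i rfl x
    exact LinearMap.congr_fun (hd i) x
  rintro _ ⟨x, rfl⟩
  exact d_lcast_d _ x

variable [∀ i, FiniteDimensional ℝ (A i)]

variable {d} in
lemma mnum_sub_bnum (hd : ∀ i, (d (i + 1)).comp (d i) = 0) (k : ℤ) :
    (mnum A k : ℤ) - bnum A d k = diffRank A d (k - 1) + diffRank A d k := by
  have finrank_cocycles :
      bnum A d k + diffRank A d (k - 1) = finrank ℝ (cocycles A d k) := by
    rw [← finrank_cobound, ← inf_eq_right.mpr (cobound_le_cocycles A hd k)]
    exact finrank_quotient_comap_subtype_add_finrank_inf _ _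
  have rank_nullity : diffRank A d k + finrank ℝ (cocycles A d k) = mnum A k :=
    finrank_range_add_finrank_ker (d k)
  omega

variable (ℓ : ℤ) (φ : ∀ i, A i →ₗ[ℝ] A (i + ℓ))

lemma rnum_le_vnum (k : ℤ) : rnum A d ℓ φ k ≤ vnum A ℓ φ k :=
  (Submodule.finrank_quotient_le _).trans (Submodule.finrank_mono map_le_range)

lemma vnum_sub_rnum_le (k : ℤ) :
    (vnum A ℓ φ k : ℤ) - rnum A d ℓ φ k ≤ diffRank A d (k + ℓ - 1) + diffRank A d k := by
  have range_le : vnum A ℓ φ k ≤ finrank ℝ ((cocycles A d k).map (φ k)) + diffRank A d k :=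
    finrank_range_le_finrank_map_ker_add_finrank_range (φ k) (d k)
  have map_cocycles_le :
      finrank ℝ ((cocycles A d k).map (φ k)) ≤ rnum A d ℓ φ k + diffRank A d (k + ℓ - 1) := by
    rw [← finrank_cobound, rnum, ← finrank_quotient_comap_subtype_add_finrank_inf
      ((cocycles A d k).map (φ k)) (cobound A d (k + ℓ))]
    gcongr
    exact Submodule.finrank_mono inf_le_right
  omega

end Ranks

end ConeMorse

theorem strong_rank_deviation_bound_general
    (ℓ : ℤ) (hℓ : 1 ≤ ℓ)
    (C : ℤ → Type) [∀ i, AddCommGroup (C i)] [∀ i, Module ℝ (C i)]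
    [∀ i, FiniteDimensional ℝ (C i)]
    (hC : ∀ i < 0, Subsingleton (C i))
    (d : ∀ i, C i →ₗ[ℝ] C (i + 1))
    (hd : ∀ i, (d (i + 1)).comp (d i) = 0)
    (φ : ∀ i, C i →ₗ[ℝ] C (i + ℓ)) (j : ℕ) :
    ∑ k ∈ Finset.range (j + 1), (-1 : ℤ) ^ (j - k) *
        (((vnum C ℓ φ ((k : ℤ) - ℓ) : ℤ) - rnum C d ℓ φ ((k : ℤ) - ℓ)) +
          ((vnum C ℓ φ ((k : ℤ) - ℓ + 1) : ℤ) - rnum C d ℓ φ ((k : ℤ) - ℓ + 1))) ≤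
      ∑ k ∈ Finset.range (j + 1), (-1 : ℤ) ^ (j - k) *
        (((mnum C (k : ℤ) : ℤ) - bnum C d (k : ℤ)) +
          ((mnum C ((k : ℤ) - ℓ + 1) : ℤ) - bnum C d ((k : ℤ) - ℓ + 1))) := by
  let f (k : ℕ) : ℤ := vnum C ℓ φ (k - ℓ) - rnum C d ℓ φ (k - ℓ)
  let g (k : ℕ) : ℤ := diffRank C d (k - 1) + diffRank C d (k - ℓ)
  have f_nonneg (k : ℕ) : 0 ≤ f k :=
    sub_nonneg.mpr (Nat.cast_le.mpr (rnum_le_vnum C d ℓ φ (k - ℓ)))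
  have f_le_g (k : ℕ) : f k ≤ g k := by
    simpa only [sub_add_cancel] using vnum_sub_rnum_le C d ℓ φ (k - ℓ)
  have g_zero : g 0 = 0 := by
    have := hC (0 - 1) (by lia)
    have := hC (0 - ℓ) (by lia)
    simp only [g, Nat.cast_zero, diffRank_eq_zero, add_zero]
  have f_zero_eq_g_zero : f 0 = g 0 := (f_le_g 0).antisymm (g_zero.trans_le (f_nonneg 0))
  have cast_succ_sub (k : ℕ) (m : ℤ) : ((k + 1 : ℕ) : ℤ) - m = k - m + 1 := by lia
  have g_add_succ (k : ℕ) : g k + g (k + 1) =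
      (mnum C k - bnum C d k) + (mnum C (k - ℓ + 1) - bnum C d (k - ℓ + 1)) := by
    simp only [g, mnum_sub_bnum C hd, cast_succ_sub, sub_add_cancel, add_sub_cancel_right]
    ring
  simpa only [g_add_succ, f, cast_succ_sub] using
    alternating_sum_add_succ_le f_zero_eq_g_zero (f_le_g (j + 1))

/-- STATEMENT 13: for every integer `j ≥ 0`,
`Σ_{k=0}^{j} (−1)^{j−k} ((v_{k−ℓ} − r_{k−ℓ}) + (v_{k−ℓ+1} − r_{k−ℓ+1}))
  ≤ Σ_{k=0}^{j} (−1)^{j−k} ((m_k − b_k) + (m_{k−ℓ+1} − b_{k−ℓ+1}))`. -/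
theorem strong_rank_deviation_bound
    (n ℓ : ℤ) (hn : 0 ≤ n) (hℓ : 1 ≤ ℓ)
    (C : ℤ → Type) [∀ i, AddCommGroup (C i)] [∀ i, Module ℝ (C i)]
    [∀ i, FiniteDimensional ℝ (C i)]
    (hC : ∀ i, i < 0 ∨ n < i → Subsingleton (C i))
    (d : ∀ i, C i →ₗ[ℝ] C (i + 1))
    (hd : ∀ i, (d (i + 1)).comp (d i) = 0)
    (φ : ∀ i, C i →ₗ[ℝ] C (i + ℓ))
    (hφ : ∀ i, (d (i + ℓ)).comp (φ i) =
      ((-1 : ℝ) ^ ℓ) • (lcast C (show i + 1 + ℓ = i + ℓ + 1 by ring)).comp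
        ((φ (i + 1)).comp (d i))) :
    ∀ j : ℕ,
      ∑ k ∈ Finset.range (j + 1), (-1 : ℤ) ^ (j - k) *
          (((vnum C ℓ φ ((k : ℤ) - ℓ) : ℤ) - rnum C d ℓ φ ((k : ℤ) - ℓ)) +
            ((vnum C ℓ φ ((k : ℤ) - ℓ + 1) : ℤ) - rnum C d ℓ φ ((k : ℤ) - ℓ + 1))) ≤
        ∑ k ∈ Finset.range (j + 1), (-1 : ℤ) ^ (j - k) *
          (((mnum C (k : ℤ) : ℤ) - bnum C d (k : ℤ)) +
            ((mnum C ((k : ℤ) - ℓ + 1) : ℤ) - bnum C d ((k : ℤ) - ℓ + 1))) := by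
  exact strong_rank_deviation_bound_general ℓ hℓ C (fun i hi => hC i (.inl hi)) d hd φ
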